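/- Coercivity bound, part (ii): let d ≥ 1, β ≥ 1/2, and let W : ℤ^d → ℂ be such that c(W) := (2π)^{−d/2}(∑_l |W(l)| |l| + ∑_l |W(l)| |l|^{3/2}) < ∞. Suppose K > c(W). Then there exists a constant γ > 0 such that for every a : ℤ^d → ℂ with a(0) = 0 and ∑_k |k|^{2β} |a(k)|² < ∞, one has γ ∑_k (1 + |k|^{2β}) |a(k)|² ≤ K ∑_k |k|^{2β} |a(k)|² − (2π)^{−d/2} |∑_{l∈ℤ^d} ∑_{k∈ℤ^d} W(l) a(−l−k) a(k) (l·k)| + γ ∑_k |a(k)|². (Equivalently, γ‖u‖²_{H^β} ≤ B[u,u] + γ‖u‖² for the bilinear form B of the fractional Fokker–Planck equation and zero-mean u.) -/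

import Mathlib

/-!
Write `S = ∑ |k|^{2β}|a k|²`. The theorem holds with `γ = K - c(W)`, once the double sum is bounded
by `(∑ |W l| (|l| + |l|^{3/2})) S`. For fixed `l`, Cauchy–Schwarz and subadditivity of the square
root give
`|l·k| ≤ |l||k| ≤ |l| |k|^{1/2} (|l+k|^{1/2} + |l|^{1/2})`.
Since `a 0 = 0` and nonzero lattice points have norm at least `1`, both `|a k|` and `|k|^{1/2}|a k|`
are at most `b k = |k|^β |a k|`, so each term is at most
`|W l| (|l| + |l|^{3/2}) b(-l-k) b(k)` (`norm_term_le`). By AM–GM, and because `k ↦ -l-k` is a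
bijection of `ℤ^d`, the sum over `k` of `b(-l-k) b(k)` is at most `S`.
-/

open scoped BigOperators

/-- Euclidean norm of a lattice point `k ∈ ℤ^d`. -/
noncomputable def znorm {d : ℕ} (k : Fin d → ℤ) : ℝ :=
  Real.sqrt (∑ i, ((k i : ℝ)) ^ 2)

/-- Dot product `l · k` of lattice points, as a complex number. -/
def zdot {d : ℕ} (l k : Fin d → ℤ) : ℂ :=
  ((∑ i, l i * k i : ℤ) : ℂ)

/-- The constant `c(W) = (2π)^{−d/2} (∑ |W l||l| + ∑ |W l||l|^{3/2})`. -/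
noncomputable def cW {d : ℕ} (W : (Fin d → ℤ) → ℂ) : ℝ :=
  (2 * Real.pi) ^ (-(d : ℝ) / 2) *
    ((∑' l, ‖W l‖ * znorm l) + ∑' l, ‖W l‖ * znorm l ^ ((3 : ℝ) / 2))

/-- The lattice point `k` as a vector of Euclidean space. -/
noncomputable def zvec {d : ℕ} (k : Fin d → ℤ) : EuclideanSpace ℝ (Fin d) :=
  WithLp.toLp 2 (fun i => (k i : ℝ))

lemma znorm_eq {d : ℕ} (k : Fin d → ℤ) : znorm k = ‖zvec k‖ := by
  simp [znorm, zvec, EuclideanSpace.norm_eq]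

lemma znorm_nonneg {d : ℕ} (k : Fin d → ℤ) : 0 ≤ znorm k := Real.sqrt_nonneg _

lemma norm_zdot_le {d : ℕ} (l k : Fin d → ℤ) : ‖zdot l k‖ ≤ znorm l * znorm k := by
  have h : ‖zdot l k‖ = |inner ℝ (zvec l) (zvec k)| := by
    rw [zdot, Complex.norm_intCast]
    simp [zvec, PiLp.inner_apply, mul_comm]
  rw [h, znorm_eq, znorm_eq]
  exact abs_real_inner_le_norm _ _

lemma znorm_le_add {d : ℕ} (l k : Fin d → ℤ) : znorm k ≤ znorm (-l - k) + znorm l := by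
  have h : zvec k = -(zvec (-l - k) + zvec l) := by
    ext i
    simp [zvec]
  rw [znorm_eq, znorm_eq, znorm_eq, h, norm_neg]
  exact norm_add_le _ _

lemma one_le_znorm {d : ℕ} {k : Fin d → ℤ} (hk : k ≠ 0) : 1 ≤ znorm k := by
  obtain ⟨i, hi⟩ := Function.ne_iff.mp hk
  rw [znorm, Real.one_le_sqrt]
  have h1 : (1 : ℝ) ≤ (k i : ℝ) ^ 2 := by
    have : (1 : ℤ) ≤ k i ^ 2 := Int.add_one_le_iff.mpr (sq_pos_of_ne_zero hi)
    exact_mod_cast this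
  exact h1.trans (Finset.single_le_sum (f := fun i => (k i : ℝ) ^ 2)
    (fun j _ => sq_nonneg _) (Finset.mem_univ i))

lemma norm_le_weighted {d : ℕ} {β : ℝ} (hβ : 1 / 2 ≤ β) {a : (Fin d → ℤ) → ℂ} (ha : a 0 = 0)
    (k : Fin d → ℤ) : ‖a k‖ ≤ znorm k ^ β * ‖a k‖ := by
  by_cases hk : k = 0
  · simp [hk, ha]
  · exact le_mul_of_one_le_left (norm_nonneg _)
      (Real.one_le_rpow (one_le_znorm hk) (by linarith))

lemma sqrt_mul_norm_le_weighted {d : ℕ} {β : ℝ} (hβ : 1 / 2 ≤ β) {a : (Fin d → ℤ) → ℂ}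
    (ha : a 0 = 0) (k : Fin d → ℤ) : √(znorm k) * ‖a k‖ ≤ znorm k ^ β * ‖a k‖ := by
  by_cases hk : k = 0
  · simp [hk, ha]
  · rw [Real.sqrt_eq_rpow]
    gcongr
    exact one_le_znorm hk

/-- The pointwise estimate: splitting `|k|` as `|k|^{1/2} |k|^{1/2}` and transferring one of the
halves to `-l-k` leaves only half a derivative on each factor `a`. -/
lemma norm_term_le {d : ℕ} {β : ℝ} (hβ : 1 / 2 ≤ β) {a : (Fin d → ℤ) → ℂ} (ha : a 0 = 0)
    (w : ℂ) (l k : Fin d → ℤ) :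
    ‖w * a (-l - k) * a k * zdot l k‖ ≤
      (‖w‖ * znorm l + ‖w‖ * znorm l ^ ((3 : ℝ) / 2)) *
        ((znorm (-l - k) ^ β * ‖a (-l - k)‖) * (znorm k ^ β * ‖a k‖)) := by
  set m := -l - k with hm
  have hl := znorm_nonneg l
  have hk := znorm_nonneg k
  have hmn := znorm_nonneg m
  have h32 : znorm l ^ ((3 : ℝ) / 2) = znorm l * √(znorm l) := by
    rw [Real.sqrt_eq_rpow, show (3 : ℝ) / 2 = 1 + 1 / 2 by norm_num,
      Real.rpow_add_of_nonneg hl (by norm_num) (by norm_num), Real.rpow_one]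
  have hsqrt : √(znorm k) ≤ √(znorm m) + √(znorm l) :=
    by
    rw [Real.sqrt_le_left (by positivity), add_sq, Real.sq_sqrt hmn, Real.sq_sqrt hl]
    have : 0 ≤ 2 * √(znorm m) * √(znorm l) := by positivity
    linarith [znorm_le_add l k]
  have hkk : znorm k = √(znorm k) * √(znorm k) := (Real.mul_self_sqrt hk).symm
  have e1 := norm_le_weighted hβ ha m
  have e2 := sqrt_mul_norm_le_weighted hβ ha m
  have e3 := sqrt_mul_norm_le_weighted hβ ha k
  set bm := znorm m ^ β * ‖a m‖
  set bk := znorm k ^ β * ‖a k‖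
  calc ‖w * a m * a k * zdot l k‖ = ‖w‖ * ‖a m‖ * ‖a k‖ * ‖zdot l k‖ := by simp only [norm_mul]
    _ ≤ ‖w‖ * ‖a m‖ * ‖a k‖ * (znorm l * (√(znorm k) * √(znorm k))) := by
      rw [← hkk]
      gcongr
      exact norm_zdot_le l k
    _ ≤ ‖w‖ * ‖a m‖ * ‖a k‖ * (znorm l * (√(znorm k) * (√(znorm m) + √(znorm l)))) := by
      gcongr
    _ = ‖w‖ * znorm l * ((√(znorm m) * ‖a m‖) * (√(znorm k) * ‖a k‖)) +
        ‖w‖ * znorm l * √(znorm l) * (‖a m‖ * (√(znorm k) * ‖a k‖)) := by ring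
    _ ≤ ‖w‖ * znorm l * (bm * bk) + ‖w‖ * znorm l * √(znorm l) * (bm * bk) := by
      gcongr
    _ = _ := by rw [h32]; ring

/-- **Coercivity bound, part (ii).**
For `β ≥ 1/2`, `W` with `c(W) < ∞` and `K > c(W)` there is a single constant `γ > 0`
such that for every zero-mean `a` with `∑ |k|^{2β}|a k|² < ∞`,
`γ ∑ (1+|k|^{2β})|a k|² ≤ K ∑ |k|^{2β}|a k|²
  − (2π)^{−d/2}|∑_l ∑_k W(l)a(−l−k)a(k)(l·k)| + γ ∑ |a k|²`;
equivalently `γ‖u‖²_{H^β} ≤ B[u,u] + γ‖u‖²`. -/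
theorem coercivity_bound_ii (d : ℕ) (hd : 1 ≤ d) (β : ℝ) (hβ : 1 / 2 ≤ β)
    (W : (Fin d → ℤ) → ℂ)
    (hW1 : Summable fun l => ‖W l‖ * znorm l)
    (hW2 : Summable fun l => ‖W l‖ * znorm l ^ ((3 : ℝ) / 2))
    (K : ℝ) (hK : cW W < K) :
    ∃ γ : ℝ, 0 < γ ∧ ∀ a : (Fin d → ℤ) → ℂ,
      a 0 = 0 →
      Summable (fun k => znorm k ^ (2 * β) * ‖a k‖ ^ 2) →
      γ * ∑' k, (1 + znorm k ^ (2 * β)) * ‖a k‖ ^ 2 ≤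
        K * ∑' k, znorm k ^ (2 * β) * ‖a k‖ ^ 2 -
          (2 * Real.pi) ^ (-(d : ℝ) / 2) *
            ‖∑' l, ∑' k, W l * a (-l - k) * a k * zdot l k‖ +
          γ * ∑' k, ‖a k‖ ^ 2 := by
  refine ⟨K - cW W, sub_pos.mpr hK, fun a ha hS => ?_⟩
  set S := ∑' k, znorm k ^ (2 * β) * ‖a k‖ ^ 2 with hSdef
  have hsq : ∀ k, (znorm k ^ β * ‖a k‖) ^ 2 = znorm k ^ (2 * β) * ‖a k‖ ^ 2 := fun k => by
    rw [mul_pow, ← Real.rpow_natCast (znorm k ^ β), ← Real.rpow_mul (znorm_nonneg k)]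
    norm_num [mul_comm]
  have hA : Summable fun k => ‖a k‖ ^ 2 := by
    refine hS.of_nonneg_of_le (fun k => by positivity) fun k => ?_
    rw [← hsq]
    exact pow_le_pow_left₀ (norm_nonneg _) (norm_le_weighted hβ ha k) 2
  have hsplit : ∑' k, (1 + znorm k ^ (2 * β)) * ‖a k‖ ^ 2 = ∑' k, ‖a k‖ ^ 2 + S := by
    rw [hSdef, ← hA.tsum_add hS]
    simp only [add_mul, one_mul]
  have hHS : HasSum (fun k => (znorm k ^ β * ‖a k‖) ^ 2) S := by
    simp only [hsq]
    exact hS.hasSum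
  have hinner : ∀ l, ‖∑' k, W l * a (-l - k) * a k * zdot l k‖ ≤
      (‖W l‖ * znorm l + ‖W l‖ * znorm l ^ ((3 : ℝ) / 2)) * S := fun l => by
    have hHS' : HasSum (fun k => (znorm (-l - k) ^ β * ‖a (-l - k)‖) ^ 2) S :=
      (Equiv.subLeft (-l)).hasSum_iff.mpr hHS
    have hmean := (hHS'.add hHS).mul_left (1 / 2)
    rw [show 1 / 2 * (S + S) = S by ring] at hmean
    refine tsum_of_norm_bounded
      (hmean.mul_left (‖W l‖ * znorm l + ‖W l‖ * znorm l ^ ((3 : ℝ) / 2))) fun k => ?_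
    refine (norm_term_le hβ ha (W l) l k).trans ?_
    have hl := znorm_nonneg l
    refine mul_le_mul_of_nonneg_left ?_ (by positivity)
    linarith [two_mul_le_add_sq (znorm (-l - k) ^ β * ‖a (-l - k)‖) (znorm k ^ β * ‖a k‖)]
  have hdouble := tsum_of_norm_bounded ((hW1.hasSum.add hW2.hasSum).mul_right S) hinner
  have hc : (0 : ℝ) ≤ (2 * Real.pi) ^ (-(d : ℝ) / 2) := by positivity
  have hfinal := mul_le_mul_of_nonneg_left hdouble hc
  rw [← mul_assoc] at hfinal
  change _ ≤ cW W * S at hfinal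
  rw [hsplit]
  linarith
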